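/- Let m, k be positive integers and a, b nonnegative integers with a + b > 1 and m·a + (m+1)·b = k + m, and let p be the polynomial associated to the equation f^{(k)} = f^a (f')^b and the multiplicity m (i.e. the exponent list consists of a copies of 0 and b copies of 1). Then: (i) for an integer r with m ≤ r < k + m, p(r) = 0 if and only if b·(r+1) = k + m; (ii) for an integer r with k + m ≤ r ≤ k + 2m + 1, p(r) = 0 if and only if one of the following holds: r = k + 2m + 1 with a = 0, b·(m+1) = k + m, and k odd; or r = k + 2m with a·m = k + m, b = 0, and k even; or r = k + 2m − 1 with a·m = k − 1, b = 1, and k odd. -/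

import Mathlib

noncomputable section

/-- The falling factorial `(x)_j = x (x-1) ⋯ (x-j+1)`, with `(x)_0 = 1`. -/
def fall (x : ℤ) (j : ℕ) : ℤ := ∏ i ∈ Finset.range j, (x - (i : ℤ))

/-- The polynomial `p(x) = (x-m)_k - ∑_{i=1}^d (-1)^{k-jᵢ} (k+m-1)_{k-jᵢ} (x-m)_{jᵢ}`
associated to the differential equation `f⁽ᵏ⁾ = f⁽ʲ¹⁾ ⋯ f⁽ʲᵈ⁾` and the multiplicity `m`. -/
def assocPoly (k m d : ℕ) (j : Fin d → ℕ) (x : ℤ) : ℤ :=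
  fall (x - (m : ℤ)) k -
    ∑ i : Fin d, (-1 : ℤ) ^ (k - j i) * fall ((k : ℤ) + (m : ℤ) - 1) (k - j i)
      * fall (x - (m : ℤ)) (j i)

/-- `q` is the greatest common divisor of the positive integer roots of `p`. -/
def IsGcdOfPosRoots (p : ℤ → ℤ) (q : ℕ) : Prop :=
  (∀ r : ℕ, 0 < r → p (r : ℤ) = 0 → q ∣ r) ∧
    ∀ t : ℕ, (∀ r : ℕ, 0 < r → p (r : ℤ) = 0 → t ∣ r) → t ∣ q

/-!
Write `k = n + 1`, `F = (n+m)_n > 0` and `K = k + m`. The relation `m a + (m+1) b = K` turns `p`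
into `p(r) = (r-m)_k - (-1)^n F (b (r+1) - K)`. For `m ≤ r < K` the falling factorial vanishes,
which leaves the linear factor. For `r ≥ K` it is positive, so that the sign of
`(-1)^n (b (r+1) - K)` excludes roots unless `b = 0` (`n` odd) or `b ≥ 1` (`n` even). The cases
`b = 0` and `b = 1` say that two falling factorials of the same length agree, and strict
monotonicity yields the root. For `b ≥ 2` the linear term wins as long as `r ≤ k + 2m`; from
`r = k + 2m + 1` on, `(m+1) p(r)` is a sum of two nonnegative terms, one vanishing only at
`r = k + 2m + 1` and the other only for `a = 0`.
-/

theorem fall_eq_eval_descPochhammer (x : ℤ) (n : ℕ) : fall x n = (descPochhammer ℤ n).eval x :=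
  (descPochhammer_eval_eq_prod_range n x).symm

theorem fall_zero (x : ℤ) : fall x 0 = 1 :=
  Finset.prod_range_zero _

theorem fall_one (x : ℤ) : fall x 1 = x := by
  simp [fall]

theorem fall_succ_right (x : ℤ) (n : ℕ) : fall x (n + 1) = fall x n * (x - n) :=
  Finset.prod_range_succ _ n

theorem fall_succ_left (x : ℤ) (n : ℕ) : fall x (n + 1) = x * fall (x - 1) n := by
  simp [fall_eq_eval_descPochhammer, descPochhammer_succ_left]

theorem fall_add_one_succ (x : ℤ) (n : ℕ) : fall (x + 1) (n + 1) = fall x n * (x + 1) := by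
  rw [fall_succ_left, add_sub_cancel_right, mul_comm]

theorem fall_eq_zero_of_lt {x : ℤ} {n : ℕ} (hx : 0 ≤ x) (hxn : x < n) : fall x n = 0 := by
  lift x to ℕ using hx
  rw [fall_eq_eval_descPochhammer, ← descPochhammer_eval_coe_nat_of_lt (Int.ofNat_lt.mp hxn)]

theorem fall_pos {x : ℤ} {n : ℕ} (hx : (n : ℤ) ≤ x) : 0 < fall x n := by
  rw [fall_eq_eval_descPochhammer]
  exact descPochhammer_pos (by lia)

theorem fall_monotoneOn (n : ℕ) : MonotoneOn (fall · n) (Set.Ici (n - 1)) := by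
  simpa only [fall_eq_eval_descPochhammer] using monotoneOn_descPochhammer_eval n

theorem fall_strictMonoOn {n : ℕ} (hn : n ≠ 0) : StrictMonoOn (fall · n) (Set.Ici (n - 1)) := by
  obtain ⟨n, rfl⟩ := Nat.exists_eq_succ_of_ne_zero hn
  intro x hx y hy hxy
  simp only [Set.mem_Ici, Nat.succ_eq_add_one, Nat.cast_add, Nat.cast_one,
    add_sub_cancel_right] at hx hy
  have hle : fall x n ≤ fall y n :=
    fall_monotoneOn n (Set.mem_Ici.mpr (by lia)) (Set.mem_Ici.mpr (by lia)) hxy.le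
  simp only [Nat.succ_eq_add_one, fall_succ_right]
  calc fall x n * (x - n) ≤ fall y n * (x - n) := mul_le_mul_of_nonneg_right hle (by lia)
    _ < fall y n * (y - n) := mul_lt_mul_of_pos_left (by lia) (fall_pos (by lia))

theorem fall_inj {n : ℕ} (hn : n ≠ 0) {x y : ℤ} (hx : n - 1 ≤ x) (hy : n - 1 ≤ y) :
    fall x n = fall y n ↔ x = y :=
  (fall_strictMonoOn hn).injOn.eq_iff hx hy

section Roots

variable {m n a b : ℕ} {r : ℤ}

theorem fall_succ_eq_mul_iff (hn : n ≠ 0) (hr : n + 1 + m ≤ r) :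
    fall (r - m) (n + 1) = fall (n + m) n * (r + 1 - (n + m + 1)) ↔ r = n + 2 * m := by
  have hlin : r + 1 - (n + m + 1) = r - m - n := by ring
  rw [fall_succ_right, hlin, mul_left_inj' (by lia), fall_inj hn (by lia) (by lia)]
  lia

theorem fall_succ_lt_mul_of_two_le (hb : 2 ≤ b) (hr : n + 1 + m ≤ r) (hr' : r ≤ n + 1 + 2 * m) :
    fall (r - m) (n + 1) < fall (n + m) n * (b * (r + 1) - (n + m + 1)) := by
  have hF : 0 < fall (n + m) n := fall_pos (by lia)
  have hlin : (n + m + 1 : ℤ) < b * (r + 1) - (n + m + 1) := by nlinarith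
  calc fall (r - m) (n + 1) ≤ fall (n + m + 1) (n + 1) :=
        fall_monotoneOn (n + 1) (Set.mem_Ici.mpr (by lia)) (Set.mem_Ici.mpr (by lia)) (by lia)
    _ = fall (n + m) n * (n + m + 1) := fall_add_one_succ _ n
    _ < fall (n + m) n * (b * (r + 1) - (n + m + 1)) := mul_lt_mul_of_pos_left hlin hF

-- `(n+m+1)_n` is the value of `(r-m-1)_n` at the boundary point `r = n + 2m + 2`.
theorem succ_mul_fall_succ_sub_mul (m n b : ℕ) (r : ℤ) :
    (m + 1) * (fall (r - m) (n + 1) - fall (n + m) n * (b * (r + 1) - (n + m + 1))) =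
      (r - m) * (m + 1) * (fall (r - m - 1) n - fall (n + m + 1) n) +
        fall (n + m) n * (r + 1) * (n + 1 + m - (m + 1) * b) := by
  have hratio : fall (n + m + 1) n * (m + 1) = fall (n + m) n * (n + m + 1) := by
    rw [← fall_add_one_succ, fall_succ_right]; ring
  rw [fall_succ_left]
  linear_combination (r - m) * hratio

theorem fall_succ_eq_mul_iff_of_lt (hn : n ≠ 0) (hb : (m + 1) * b ≤ n + 1 + m)
    (hr : n + 1 + 2 * m < r) :
    fall (r - m) (n + 1) = fall (n + m) n * (b * (r + 1) - (n + m + 1)) ↔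
      r = n + 1 + 2 * m + 1 ∧ (m + 1) * b = n + 1 + m := by
  have hF : 0 < fall (n + m) n := fall_pos (by lia)
  have hcoeff : 0 < (r - m) * (m + 1) := mul_pos (by lia) (by lia)
  have hcoeff' : 0 < fall (n + m) n * (r + 1) := mul_pos hF (by lia)
  have hmono : 0 ≤ fall (r - m - 1) n - fall (n + m + 1) n := sub_nonneg.mpr <|
    fall_monotoneOn n (Set.mem_Ici.mpr (by lia)) (Set.mem_Ici.mpr (by lia)) (by lia)
  have hb' : (0 : ℤ) ≤ n + 1 + m - (m + 1) * b := sub_nonneg.mpr (mod_cast hb)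
  rw [← sub_eq_zero, ← mul_eq_zero_iff_left (a := (m + 1 : ℤ)) (by lia),
    succ_mul_fall_succ_sub_mul, add_eq_zero_iff_of_nonneg (by positivity) (by positivity),
    mul_eq_zero_iff_left hcoeff.ne', mul_eq_zero_iff_left hcoeff'.ne', sub_eq_zero,
    fall_inj hn (by lia) (by lia), sub_eq_zero]
  refine and_congr (by lia) ?_
  rw [eq_comm]
  norm_cast

theorem fall_succ_eq_mul_iff_of_two_le (hb_two : 2 ≤ b) (hb : (m + 1) * b ≤ n + 1 + m)
    (hr : n + 1 + m ≤ r) :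
    fall (r - m) (n + 1) = fall (n + m) n * (b * (r + 1) - (n + m + 1)) ↔
      r = n + 1 + 2 * m + 1 ∧ (m + 1) * b = n + 1 + m := by
  rcases le_or_gt r (n + 1 + 2 * m) with hle | hlt
  · have hne := (fall_succ_lt_mul_of_two_le hb_two hr hle).ne
    exact ⟨fun h => absurd h hne, fun h => by lia⟩
  · have hn : n ≠ 0 := by nlinarith
    exact fall_succ_eq_mul_iff_of_lt hn hb hlt

/-- The exponent list of the right-hand side `fᵃ (f')ᵇ`: `a` copies of `0`, then `b` copies
of `1`. -/
def powMulDerivPowExponents (a b : ℕ) : Fin (a + b) → ℕ := fun i => if (i : ℕ) < a then 0 else 1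

theorem sum_powMulDerivPowExponents {M : Type*} [AddCommMonoid M] (a b : ℕ) (g : ℕ → M) :
    ∑ i, g (powMulDerivPowExponents a b i) = a • g 0 + b • g 1 := by
  simp [Fin.sum_univ_add, powMulDerivPowExponents]

theorem assocPoly_powMulDerivPow (hsum : m * a + (m + 1) * b = n + 1 + m) (r : ℤ) :
    assocPoly (n + 1) m (a + b) (powMulDerivPowExponents a b) r =
      fall (r - m) (n + 1) - (-1) ^ n * (fall (n + m) n * (b * (r + 1) - (n + m + 1))) := by
  have hsum' : (m : ℤ) * a + (m + 1) * b = n + 1 + m := mod_cast hsum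
  have hfall : fall (n + m) (n + 1) = fall (n + m) n * m := by rw [fall_succ_right]; ring
  have hcast : ((n + 1 : ℕ) : ℤ) + m - 1 = n + m := by push_cast; ring
  rw [assocPoly, hcast, sum_powMulDerivPowExponents a b fun j =>
    (-1) ^ (n + 1 - j) * fall (n + m) (n + 1 - j) * fall (r - m) j]
  simp only [nsmul_eq_mul, Nat.sub_zero, Nat.add_sub_cancel, hfall, fall_zero, fall_one]
  linear_combination (-1) ^ n * fall (n + m) n * hsum'

theorem assocPoly_eq_zero_iff_of_lt (hsum : m * a + (m + 1) * b = n + 1 + m)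
    (hmr : m ≤ r) (hr : r < n + 1 + m) :
    assocPoly (n + 1) m (a + b) (powMulDerivPowExponents a b) r = 0 ↔
      b * (r + 1) = n + 1 + m := by
  have hF : fall (n + m) n ≠ 0 := (fall_pos (by lia)).ne'
  have hzero : fall (r - m) (n + 1) = 0 := fall_eq_zero_of_lt (by lia) (by lia)
  rw [assocPoly_powMulDerivPow hsum, hzero, zero_sub, neg_eq_zero, mul_eq_zero_iff_left (by simp),
    mul_eq_zero_iff_left hF, sub_eq_zero, add_right_comm]

theorem assocPoly_eq_zero_iff_of_odd (hn : Odd n) (hsum : m * a + (m + 1) * b = n + 1 + m)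
    (hr : n + 1 + m ≤ r) :
    assocPoly (n + 1) m (a + b) (powMulDerivPowExponents a b) r = 0 ↔
      b = 0 ∧ r = n + 1 + 2 * m := by
  rw [assocPoly_powMulDerivPow hsum, hn.neg_one_pow]
  rcases Nat.eq_zero_or_pos b with rfl | hb
  · have hfall : fall (r - m) (n + 1) = fall (n + m + 1) (n + 1) ↔ r - m = n + m + 1 :=
      fall_inj n.succ_ne_zero (by lia) (by lia)
    rw [fall_add_one_succ] at hfall
    grind
  · have hF : 0 < fall (n + m) n := fall_pos (by lia)
    have hpos : 0 < fall (r - m) (n + 1) := fall_pos (by lia)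
    have hlin : 0 < b * (r + 1) - (n + m + 1) := by nlinarith
    have hprod := mul_pos hF hlin
    constructor <;> intro h <;> lia

theorem assocPoly_eq_zero_iff_of_even (hn : Even n) (hm : 0 < m) (hab : 1 < a + b)
    (hsum : m * a + (m + 1) * b = n + 1 + m) (hr : n + 1 + m ≤ r) :
    assocPoly (n + 1) m (a + b) (powMulDerivPowExponents a b) r = 0 ↔
      (b = 1 ∧ r = n + 2 * m) ∨ (a = 0 ∧ r = n + 1 + 2 * m + 1) := by
  rw [assocPoly_powMulDerivPow hsum, hn.neg_one_pow, one_mul, sub_eq_zero]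
  obtain rfl | rfl | hb : b = 0 ∨ b = 1 ∨ 2 ≤ b := by lia
  · have hpos : 0 < fall (r - m) (n + 1) := fall_pos (by lia)
    have hF : 0 < fall (n + m) n := fall_pos (by lia)
    have hneg : fall (n + m) n * (-(n + m + 1)) < 0 := mul_neg_of_pos_of_neg hF (by lia)
    simp only [Nat.cast_zero, zero_mul, zero_sub]
    constructor <;> intro h <;> lia
  · have hn0 : n ≠ 0 := by nlinarith
    rw [Nat.cast_one, one_mul, fall_succ_eq_mul_iff hn0 hr]
    lia
  · have ha : (m + 1) * b = n + 1 + m ↔ a = 0 := by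
      rw [← hsum, right_eq_add, mul_eq_zero_iff_left hm.ne']
    rw [fall_succ_eq_mul_iff_of_two_le hb (by lia) hr, ha]
    lia

end Roots

theorem roots_of_assocPoly_fa_f_prime_b_general
    (m k a b : ℕ) (hm : 0 < m) (hk : 0 < k) (hab : 1 < a + b)
    (hsum : m * a + (m + 1) * b = k + m) :
    (∀ r : ℤ, (m : ℤ) ≤ r → r < (k : ℤ) + m →
      (assocPoly k m (a + b) (fun i => if (i : ℕ) < a then 0 else 1) r = 0 ↔
        (b : ℤ) * (r + 1) = (k : ℤ) + m)) ∧
    (∀ r : ℤ, (k : ℤ) + m ≤ r →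
      (assocPoly k m (a + b) (fun i => if (i : ℕ) < a then 0 else 1) r = 0 ↔
        (r = (k : ℤ) + 2 * m + 1 ∧ a = 0 ∧ (b : ℤ) * ((m : ℤ) + 1) = (k : ℤ) + m ∧ Odd k) ∨
        (r = (k : ℤ) + 2 * m ∧ (a : ℤ) * m = (k : ℤ) + m ∧ b = 0 ∧ Even k) ∨
        (r = (k : ℤ) + 2 * m - 1 ∧ (a : ℤ) * m = (k : ℤ) - 1 ∧ b = 1 ∧ Odd k))) := by
  obtain ⟨n, rfl⟩ := Nat.exists_eq_add_one.mpr hk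
  have hsum' : (m : ℤ) * a + (m + 1) * b = n + 1 + m := mod_cast hsum
  simp only [Nat.cast_add, Nat.cast_one, ← Nat.not_even_iff_odd, Nat.even_add_one]
  refine ⟨fun r => assocPoly_eq_zero_iff_of_lt hsum, fun r hr => ?_⟩
  rcases Nat.even_or_odd n with hn | hn
  · refine (assocPoly_eq_zero_iff_of_even hn hm hab hsum hr).trans ?_
    grind
  · refine (assocPoly_eq_zero_iff_of_odd hn hsum hr).trans ?_
    grind

/-- The integer roots of the polynomial associated to
`f⁽ᵏ⁾ = fᵃ (f')ᵇ` and the multiplicity `m` (exponent list: `a` copies of `0` and `b`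
copies of `1`), in the ranges `m ≤ r < k + m` and `k + m ≤ r ≤ k + 2m + 1`. -/
theorem roots_of_assocPoly_fa_f_prime_b
    (m k a b : ℕ) (hm : 0 < m) (hk : 0 < k) (hab : 1 < a + b)
    (hsum : m * a + (m + 1) * b = k + m) :
    (∀ r : ℤ, (m : ℤ) ≤ r → r < (k : ℤ) + m →
      (assocPoly k m (a + b) (fun i => if (i : ℕ) < a then 0 else 1) r = 0 ↔
        (b : ℤ) * (r + 1) = (k : ℤ) + m)) ∧
    (∀ r : ℤ, (k : ℤ) + m ≤ r → r ≤ (k : ℤ) + 2 * m + 1 →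
      (assocPoly k m (a + b) (fun i => if (i : ℕ) < a then 0 else 1) r = 0 ↔
        (r = (k : ℤ) + 2 * m + 1 ∧ a = 0 ∧ (b : ℤ) * ((m : ℤ) + 1) = (k : ℤ) + m ∧ Odd k) ∨
        (r = (k : ℤ) + 2 * m ∧ (a : ℤ) * m = (k : ℤ) + m ∧ b = 0 ∧ Even k) ∨
        (r = (k : ℤ) + 2 * m - 1 ∧ (a : ℤ) * m = (k : ℤ) - 1 ∧ b = 1 ∧ Odd k))) := by
  have ⟨hlt, hge⟩ := roots_of_assocPoly_fa_f_prime_b_general m k a b hm hk hab hsum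
  exact ⟨hlt, fun r hr _ => hge r hr⟩
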